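/- Let h : P → Q be a saturated homomorphism of saturated commutative monoids, R a saturated commutative monoid, and g : P → R any monoid homomorphism. Then the induced homomorphism R → R ⊔_P Q into the pushout (taken in the category of commutative monoids) is a saturated homomorphism of saturated commutative monoids. (This is the paper's claim that saturated morphisms are stable under base change, stated at the level of monoids.) -/

import Mathlib

/-!
The pushout `T` of `h` along `g` is saturated because `h` is a saturated homomorphism, and by the
pasting law a pushout of `inR : R → T` along `R → R'` is a pushout of `h` along `P → R → R'`, so it
is integral and saturated as well. It remains to see that `inR` is an integral homomorphism.

Because `h` is integral, the relation on `R × Q`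
`(r, q) ∼ (r', q')` iff `q = h a + s`, `q' = h b + s`, `r + g a = r' + g b` for some `a b s`
is transitive, hence a congruence (`pushoutCon`) identifying `(g p, 0)` with `(0, h p)`. By the
universal property, an equality `inR r + inQ q = inR r' + inQ q'` in `T` forces
`(r, q) ∼ (r', q')`. Since every element of `T` has the form `inR r + inQ q`, the witnesses of
this relation are the ones required for `inR` to be integral.
-/

/-!
STATEMENT 4: Let `h : P → Q` be a saturated homomorphism of saturated commutative
monoids, `R` a saturated commutative monoid, and `g : P → R` any monoid homomorphism.
Then the induced homomorphism `R → R ⊔_P Q` into the pushout (taken in the category of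
commutative monoids) is a saturated homomorphism of saturated commutative monoids.
-/

universe u

/-- A commutative monoid (written additively) is *integral* (cancellative) if
`a + c = b + c` implies `a = b`. -/
def IsIntegralMonoid (M : Type u) [AddCommMonoid M] : Prop :=
  ∀ a b c : M, a + c = b + c → a = b

/-- An integral commutative monoid `M` is *saturated* if every element `x` of its
Grothendieck group `M^gp` with `n • x` in the image of `M` for some `n ≥ 1` lies in the
image of `M`.  For an integral monoid every element of `M^gp` is a difference `a - b`
with `a b : M`, so this says: if `n • a = n • b + c` for some `c : M` and some `n ≥ 1`,
then `a = b + d` for some `d : M`. -/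
def IsSaturatedMonoid (M : Type u) [AddCommMonoid M] : Prop :=
  IsIntegralMonoid M ∧
    ∀ (a b : M) (n : ℕ), 1 ≤ n → (∃ c : M, n • a = n • b + c) → ∃ d : M, a = b + d

/-- A homomorphism `h : P → Q` of commutative monoids is *integral* if whenever
`h p₁ + q₁ = h p₂ + q₂`, there exist `p₃ p₄ : P` and `q : Q` such that
`q₁ = h p₃ + q`, `q₂ = h p₄ + q` and `p₁ + p₃ = p₂ + p₄`. -/
def IsIntegralHom {P Q : Type u} [AddCommMonoid P] [AddCommMonoid Q] (h : P →+ Q) : Prop :=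
  ∀ (p₁ p₂ : P) (q₁ q₂ : Q), h p₁ + q₁ = h p₂ + q₂ →
    ∃ (p₃ p₄ : P) (q : Q), q₁ = h p₃ + q ∧ q₂ = h p₄ + q ∧ p₁ + p₃ = p₂ + p₄

/-- `(T, inQ, inR)` is a pushout of `h : P →+ Q` along `g : P →+ R` in the category of
commutative monoids: the square commutes and it satisfies the universal property. -/
structure IsMonoidPushout {P Q R T : Type u}
    [AddCommMonoid P] [AddCommMonoid Q] [AddCommMonoid R] [AddCommMonoid T]
    (h : P →+ Q) (g : P →+ R) (inQ : Q →+ T) (inR : R →+ T) : Prop where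
  comm : inQ.comp h = inR.comp g
  desc : ∀ (X : Type u) [AddCommMonoid X] (fQ : Q →+ X) (fR : R →+ X),
    fQ.comp h = fR.comp g → ∃! d : T →+ X, d.comp inQ = fQ ∧ d.comp inR = fR

/-- A homomorphism `h : P → Q` of saturated commutative monoids is *saturated* if it is
integral and, for every saturated commutative monoid `R` and every homomorphism
`g : P → R`, the pushout `R ⊔_P Q` in the category of commutative monoids is an integral
and saturated monoid. -/
def IsSaturatedHom {P Q : Type u} [AddCommMonoid P] [AddCommMonoid Q] (h : P →+ Q) : Prop :=
  IsIntegralHom h ∧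
    ∀ (R : Type u) [AddCommMonoid R], IsSaturatedMonoid R →
      ∀ (g : P →+ R) (T : Type u) [AddCommMonoid T] (inQ : Q →+ T) (inR : R →+ T),
        IsMonoidPushout h g inQ inR → IsIntegralMonoid T ∧ IsSaturatedMonoid T

/-- The congruence on `R × Q` whose quotient is the pushout of `h` along `g`, when `h` is integral:
`(r, q)` and `(r', q')` are related if one can split `q = h a + s` and `q' = h b + s` so that
`r + g a = r' + g b`. -/
def pushoutCon {P Q R : Type u} [AddCommMonoid P] [AddCommMonoid Q] [AddCommMonoid R]
    (h : P →+ Q) (hh : IsIntegralHom h) (g : P →+ R) : AddCon (R × Q) where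
  r x y := ∃ (a b : P) (s : Q), x.2 = h a + s ∧ y.2 = h b + s ∧ x.1 + g a = y.1 + g b
  iseqv :=
    { refl := fun x => ⟨0, 0, x.2, by simp, by simp, rfl⟩
      symm := fun ⟨a, b, s, h₁, h₂, h₃⟩ => ⟨b, a, s, h₂, h₁, h₃.symm⟩
      trans := by
        rintro x y z ⟨a, b, s, h₁, h₂, h₃⟩ ⟨c, d, t, k₁, k₂, k₃⟩
        -- Integrality refines the two decompositions `h b + s = h c + t` of the middle term.
        obtain ⟨e, f, w, rfl, rfl, hef⟩ := hh b c s t (h₂.symm.trans k₁)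
        refine ⟨a + e, d + f, w, by rw [h₁, map_add, add_assoc], by rw [k₂, map_add, add_assoc], ?_⟩
        calc x.1 + g (a + e) = x.1 + g a + g e := by rw [map_add, add_assoc]
          _ = y.1 + g (b + e) := by rw [h₃, map_add, add_assoc]
          _ = y.1 + g c + g f := by rw [hef, map_add, add_assoc]
          _ = z.1 + g (d + f) := by rw [k₃, map_add, add_assoc] }
  add' := by
    rintro x x' y y' ⟨a, b, s, h₁, h₂, h₃⟩ ⟨c, d, t, k₁, k₂, k₃⟩
    refine ⟨a + c, b + d, s + t, ?_, ?_, ?_⟩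
    · rw [Prod.snd_add, h₁, k₁, map_add, add_add_add_comm]
    · rw [Prod.snd_add, h₂, k₂, map_add, add_add_add_comm]
    · rw [Prod.fst_add, Prod.fst_add, map_add, map_add, add_add_add_comm, h₃, k₃,
        add_add_add_comm]

namespace IsMonoidPushout

variable {P Q R T : Type u} [AddCommMonoid P] [AddCommMonoid Q] [AddCommMonoid R]
  [AddCommMonoid T] {h : P →+ Q} {g : P →+ R} {inQ : Q →+ T} {inR : R →+ T}

theorem comm_apply (hpo : IsMonoidPushout h g inQ inR) (p : P) : inQ (h p) = inR (g p) :=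
  DFunLike.congr_fun hpo.comm p

theorem exists_eq_add (hpo : IsMonoidPushout h g inQ inR) (t : T) :
    ∃ (r : R) (q : Q), t = inR r + inQ q := by
  -- The submonoid `N` generated by both images receives a map from `T`; by uniqueness, composing
  -- it with the inclusion gives the identity of `T`.
  let N : AddSubmonoid T := AddMonoidHom.mrange (inR.coprod inQ)
  have memQ : ∀ q, inQ q ∈ N := fun q => ⟨(0, q), by simp⟩
  have memR : ∀ r, inR r ∈ N := fun r => ⟨(r, 0), by simp⟩
  obtain ⟨d, ⟨hdQ, hdR⟩, -⟩ := hpo.desc N (inQ.codRestrict N memQ) (inR.codRestrict N memR)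
    (by ext p; exact hpo.comm_apply p)
  have hid : N.subtype.comp d = AddMonoidHom.id T :=
    (hpo.desc T inQ inR hpo.comm).unique
      ⟨by rw [AddMonoidHom.comp_assoc, hdQ]; rfl, by rw [AddMonoidHom.comp_assoc, hdR]; rfl⟩
      ⟨rfl, rfl⟩
  obtain ⟨⟨r, q⟩, hx⟩ := (d t).2
  exact ⟨r, q, (hx.trans (DFunLike.congr_fun hid t)).symm⟩

theorem exists_of_add_eq_add (hpo : IsMonoidPushout h g inQ inR) (hh : IsIntegralHom h)
    {r r' : R} {q q' : Q} (H : inR r + inQ q = inR r' + inQ q') :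
    ∃ (a b : P) (s : Q), q = h a + s ∧ q' = h b + s ∧ r + g a = r' + g b := by
  let c := pushoutCon h hh g
  obtain ⟨d, ⟨hdQ, hdR⟩, -⟩ := hpo.desc c.Quotient
    (c.mk'.comp (AddMonoidHom.inr R Q)) (c.mk'.comp (AddMonoidHom.inl R Q)) (by
      ext p
      exact (AddCon.eq c).2 ⟨p, 0, 0, by simp, by simp, by simp⟩)
  have key : ∀ r q, d (inR r + inQ q) = c.mk' (r, q) := fun r q => by
    rw [map_add, show d (inR r) = c.mk' (r, 0) from DFunLike.congr_fun hdR r,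
      show d (inQ q) = c.mk' (0, q) from DFunLike.congr_fun hdQ q, ← map_add]
    simp
  have H' := congrArg d H
  rw [key, key] at H'
  exact (AddCon.eq c).1 H'

theorem isIntegralHom_inr (hpo : IsMonoidPushout h g inQ inR) (hh : IsIntegralHom h) :
    IsIntegralHom inR := by
  intro r₁ r₂ t₁ t₂ H
  obtain ⟨u₁, q₁, rfl⟩ := hpo.exists_eq_add t₁
  obtain ⟨u₂, q₂, rfl⟩ := hpo.exists_eq_add t₂
  rw [← add_assoc, ← add_assoc, ← map_add, ← map_add] at H
  obtain ⟨a, b, s, rfl, rfl, hr⟩ := hpo.exists_of_add_eq_add hh H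
  refine ⟨u₁ + g a, u₂ + g b, inQ s, ?_, ?_, by rw [← add_assoc, hr, add_assoc]⟩ <;>
    rw [map_add, map_add, hpo.comm_apply, add_assoc]

/-- The pasting law for pushout squares. -/
theorem paste {R' T' : Type u} [AddCommMonoid R'] [AddCommMonoid T'] {g' : R →+ R'}
    {inT : T →+ T'} {inR' : R' →+ T'} (hpo : IsMonoidPushout h g inQ inR)
    (hpo' : IsMonoidPushout inR g' inT inR') :
    IsMonoidPushout h (g'.comp g) (inT.comp inQ) inR' where
  comm := by
    rw [AddMonoidHom.comp_assoc, hpo.comm, ← AddMonoidHom.comp_assoc, hpo'.comm,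
      AddMonoidHom.comp_assoc]
  desc X _ fQ fR hf := by
    obtain ⟨d, ⟨hdQ, hdR⟩, hd⟩ := hpo.desc X fQ (fR.comp g') hf
    obtain ⟨e, ⟨heT, heR⟩, he⟩ := hpo'.desc X d fR hdR
    refine ⟨e, ⟨by rw [← AddMonoidHom.comp_assoc, heT, hdQ], heR⟩, ?_⟩
    rintro k ⟨hkQ, hkR⟩
    refine he k ⟨hd _ ⟨hkQ, ?_⟩, hkR⟩
    rw [AddMonoidHom.comp_assoc, hpo'.comm, ← AddMonoidHom.comp_assoc, hkR]

end IsMonoidPushout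

/-- Saturated homomorphisms are stable under cobase change: if `h : P → Q` is a saturated
homomorphism of saturated monoids, `R` is saturated, and `(T, inQ, inR)` is the pushout
of `h` along any `g : P → R`, then `T` is saturated and `inR : R → T` is a saturated
homomorphism of saturated commutative monoids. -/
theorem isSaturatedHom_pushout_inr {P Q R T : Type u}
    [AddCommMonoid P] [AddCommMonoid Q] [AddCommMonoid R] [AddCommMonoid T]
    (hP : IsSaturatedMonoid P) (hQ : IsSaturatedMonoid Q)
    (h : P →+ Q) (hh : IsSaturatedHom h)
    (hR : IsSaturatedMonoid R) (g : P →+ R)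
    (inQ : Q →+ T) (inR : R →+ T) (hpo : IsMonoidPushout h g inQ inR) :
    IsSaturatedMonoid T ∧ IsSaturatedHom inR := by
  exact ⟨(hh.2 R hR g T inQ inR hpo).2, hpo.isIntegralHom_inr hh.1,
    fun R' _ hR' g' T' _ inT inR' hpo' => hh.2 R' hR' (g'.comp g) T' _ inR' (hpo.paste hpo')⟩
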